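/- arXiv:1306.0323 — 2 statements merged into one kernel-verified Lean document; each statement's English description precedes it below -/
import Mathlib

section
/- Let φ, u : [a,b] → ℂ be continuous with φ(x) = φ(a) + ∫ₐˣ u(t)/p(t) dt for all x ∈ [a,b], and suppose ∫ₐᵇ |u|²/p < ∞ and ∫ₐᵇ |φ|²/p < ∞. Assume moreover that ∫ₐᵇ w|φ|² = 0 and ∫ₐᵇ w ≠ 0, and set δ := 2 + 2‖w‖_{L¹}/|∫ₐᵇ w|. Then ‖φ‖_∞² ≤ δ·‖φ'‖_{p,2}·‖φ‖_{1/p,2}, where ‖φ'‖_{p,2} := (∫ₐᵇ |u|²/p)^{1/2}, ‖φ‖_{1/p,2} := (∫ₐᵇ |φ|²/p)^{1/2}, and ‖φ‖_∞ := sup_{x∈[a,b]} |φ(x)|. -/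
open MeasureTheory Real Complex

/-!
For `x ∈ [a, b]`, the condition `∫ w|φ|² = 0` gives `|φ(x)|² ∫ w = ∫ w(t) (|φ(x)|² - |φ(t)|²) dt`,
so `|φ(x)|²` is at most `‖w‖₁ / |∫ w|` times the oscillation of `|φ|²`. Since `|φ|` is absolutely
continuous with `||φ|'| ≤ |φ'|` almost everywhere, that oscillation is at most
`2 ∫ |φ||φ'| = 2 ∫ |φ||u| / p`, and the Cauchy–Schwarz inequality for the measure `dt / p`
concludes. Arguing with `|φ|` rather than `|φ|²` lets `φ` take values in any Banach space.
-/

open Set Filter Topology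

theorem absolutelyContinuousOnInterval_of_dist_le {X Y : Type*} [PseudoMetricSpace X]
    [PseudoMetricSpace Y] {f : ℝ → X} {g : ℝ → Y} {a b : ℝ}
    (hg : AbsolutelyContinuousOnInterval g a b)
    (hfg : ∀ x ∈ uIcc a b, ∀ y ∈ uIcc a b, dist (f x) (f y) ≤ dist (g x) (g y)) :
    AbsolutelyContinuousOnInterval f a b := by
  rw [absolutelyContinuousOnInterval_iff] at hg ⊢
  intro ε hε
  obtain ⟨δ, hδ, hgδ⟩ := hg ε hε
  refine ⟨δ, hδ, fun I hI hIδ ↦ lt_of_le_of_lt ?_ (hgδ I hI hIδ)⟩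
  exact Finset.sum_le_sum fun i hi ↦ hfg _ (hI.1 i hi).1 _ (hI.1 i hi).2

theorem norm_deriv_le_of_eventually_dist_le {𝕜 F G : Type*} [NontriviallyNormedField 𝕜]
    [NormedAddCommGroup F] [NormedSpace 𝕜 F] [NormedAddCommGroup G] [NormedSpace 𝕜 G]
    {f : 𝕜 → F} {g : 𝕜 → G} {g' : G} {x : 𝕜}
    (hg : HasDerivAt g g' x) (hfg : ∀ᶠ y in 𝓝 x, dist (f y) (f x) ≤ dist (g y) (g x)) :
    ‖deriv f x‖ ≤ ‖g'‖ := by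
  by_cases hf : DifferentiableAt 𝕜 f x
  · refine le_of_tendsto_of_tendsto (hasDerivAt_iff_tendsto_slope.1 hf.hasDerivAt).norm
      (hasDerivAt_iff_tendsto_slope.1 hg).norm ?_
    filter_upwards [hfg.filter_mono nhdsWithin_le_nhds] with y hy
    simp only [slope_def_module, norm_smul, ← dist_eq_norm]
    gcongr
  · simp [deriv_zero_of_not_differentiableAt hf]

section Oscillation

theorem abs_sq_sub_sq_le_of_abs_sub_le_integral {N g : ℝ → ℝ} {a b : ℝ}
    (hg : IntervalIntegrable g volume a b)
    (hN : ∀ x ∈ uIcc a b, ∀ y ∈ uIcc a b, |N x - N y| ≤ |∫ t in y..x, g t|) :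
    |N b ^ 2 - N a ^ 2| ≤ 2 * |∫ t in a..b, (|N t| * |g t|)| := by
  set G : ℝ → ℝ := fun x ↦ ∫ t in a..x, g t
  have hNG : ∀ x ∈ uIcc a b, ∀ y ∈ uIcc a b, dist (N x) (N y) ≤ dist (G x) (G y) := by
    intro x hx y hy
    have hint : ∀ z ∈ uIcc a b, IntervalIntegrable g volume a z := fun z hz ↦
      hg.mono_set (uIcc_subset_uIcc_left hz)
    simpa only [G, Real.dist_eq,
      intervalIntegral.integral_interval_sub_left (hint x hx) (hint y hy)] using hN x hx y hy
  have hNac : AbsolutelyContinuousOnInterval N a b :=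
    absolutelyContinuousOnInterval_of_dist_le
      (hg.absolutelyContinuousOnInterval_intervalIntegral left_mem_uIcc) hNG
  have hderiv : ∀ᵐ t, t ∈ uIoc a b → ‖2 * (N t * deriv N t)‖ ≤ 2 * (|N t| * |g t|) := by
    filter_upwards [hg.ae_hasDerivAt_integral, volume.ae_ne (min a b), volume.ae_ne (max a b)]
      with t hGt hmin hmax ht
    have ht' : t ∈ uIcc a b := uIoc_subset_uIcc ht
    have hnhds : uIcc a b ∈ 𝓝 t :=
      Icc_mem_nhds (lt_of_le_of_ne ht'.1 hmin.symm) (lt_of_le_of_ne ht'.2 hmax)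
    have hN't : ‖deriv N t‖ ≤ ‖g t‖ :=
      norm_deriv_le_of_eventually_dist_le (hGt ht' a left_mem_uIcc)
        (mem_of_superset hnhds fun y hy ↦ hNG y hy t ht')
    simp only [norm_mul, Real.norm_eq_abs, abs_two] at hN't ⊢
    gcongr
  calc |N b ^ 2 - N a ^ 2| = ‖∫ t in a..b, 2 * (N t * deriv N t)‖ := by
        have hparts := hNac.integral_deriv_mul_eq_sub hNac
        rw [Real.norm_eq_abs, sq, sq, ← hparts]
        congr! 3 with t
        ring
    _ ≤ |∫ t in a..b, 2 * (|N t| * |g t|)| :=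
        intervalIntegral.norm_integral_le_abs_of_norm_le
          ((ae_restrict_iff' measurableSet_uIoc).2 hderiv)
          ((hg.abs.continuousOn_mul hNac.continuousOn.abs).const_mul 2)
    _ = 2 * |∫ t in a..b, (|N t| * |g t|)| := by
        rw [intervalIntegral.integral_const_mul, abs_mul, abs_two]

variable {E : Type*} [NormedAddCommGroup E] [NormedSpace ℝ E] {φ f : ℝ → E} {a b : ℝ}

theorem continuousOn_of_eq_add_integral (hab : a ≤ b) (hf : IntervalIntegrable f volume a b)
    (hφ : ∀ x ∈ Icc a b, φ x = φ a + ∫ t in a..x, f t) : ContinuousOn φ (Icc a b) := by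
  have hprim := intervalIntegral.continuousOn_primitive_interval' hf left_mem_uIcc
  rw [uIcc_of_le hab] at hprim
  exact (continuousOn_const.add hprim).congr hφ

theorem abs_norm_sq_sub_norm_sq_le_integral (hab : a ≤ b) (hf : IntervalIntegrable f volume a b)
    (hφ : ∀ x ∈ Icc a b, φ x = φ a + ∫ t in a..x, f t) {x y : ℝ} (hx : x ∈ Icc a b)
    (hy : y ∈ Icc a b) :
    |‖φ x‖ ^ 2 - ‖φ y‖ ^ 2| ≤ 2 * ∫ t in a..b, ‖φ t‖ * ‖f t‖ := by
  have hyx : uIcc y x ⊆ Icc a b := uIcc_subset_Icc hy hx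
  have hfint : ∀ z ∈ Icc a b, IntervalIntegrable f volume a z := fun z hz ↦
    hf.mono_set (uIcc_subset_uIcc_left (Icc_subset_uIcc hz))
  have hincr : ∀ s ∈ uIcc y x, ∀ t ∈ uIcc y x, |‖φ s‖ - ‖φ t‖| ≤ |∫ r in t..s, ‖f r‖| := by
    intro s hs t ht
    calc |‖φ s‖ - ‖φ t‖| ≤ ‖φ s - φ t‖ := abs_norm_sub_norm_le _ _
      _ = ‖∫ r in t..s, f r‖ := by
          rw [hφ s (hyx hs), hφ t (hyx ht), add_sub_add_left_eq_sub,
            intervalIntegral.integral_interval_sub_left (hfint s (hyx hs)) (hfint t (hyx ht))]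
      _ ≤ |∫ r in t..s, ‖f r‖| := intervalIntegral.norm_integral_le_abs_integral_norm
  have hprod : IntervalIntegrable (fun t ↦ ‖φ t‖ * ‖f t‖) volume a b :=
    hf.norm.continuousOn_mul
      (by simpa only [uIcc_of_le hab] using (continuousOn_of_eq_add_integral hab hf hφ).norm)
  calc |‖φ x‖ ^ 2 - ‖φ y‖ ^ 2| ≤ 2 * |∫ t in y..x, ‖φ t‖ * ‖f t‖| := by
        simpa only [abs_norm] using abs_sq_sub_sq_le_of_abs_sub_le_integral
          (hf.norm.mono_set (hyx.trans Icc_subset_uIcc)) hincr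
    _ ≤ 2 * |∫ t in a..b, ‖φ t‖ * ‖f t‖| := by
        refine mul_le_mul_of_nonneg_left ?_ zero_le_two
        exact intervalIntegral.abs_integral_mono_interval
          (uIoc_subset_uIoc_of_uIcc_subset_uIcc (hyx.trans Icc_subset_uIcc))
          (Eventually.of_forall fun t ↦ by positivity) hprod
    _ = 2 * ∫ t in a..b, ‖φ t‖ * ‖f t‖ := by
        rw [abs_of_nonneg (intervalIntegral.integral_nonneg hab fun t _ ↦ by positivity)]

end Oscillation

section CauchySchwarz

variable {α : Type*} {_ : MeasurableSpace α} {μ : Measure α}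

theorem integral_sqrt_mul_sqrt_le {f g : α → ℝ} (hf : Integrable f μ) (hg : Integrable g μ)
    (hf0 : 0 ≤ᵐ[μ] f) (hg0 : 0 ≤ᵐ[μ] g) :
    ∫ x, √(f x) * √(g x) ∂μ ≤ √(∫ x, f x ∂μ) * √(∫ x, g x ∂μ) := by
  have hsq : ∀ {h : α → ℝ}, 0 ≤ᵐ[μ] h → (fun x ↦ √(h x) ^ 2) =ᵐ[μ] h := fun hh0 ↦
    hh0.mono fun _ hx ↦ Real.sq_sqrt hx
  have hmem : ∀ {h : α → ℝ}, Integrable h μ → 0 ≤ᵐ[μ] h →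
      MemLp (fun x ↦ √(h x)) (ENNReal.ofReal 2) μ := by
    intro h hh hh0
    rw [ENNReal.ofReal_ofNat, memLp_two_iff_integrable_sq
      (Real.continuous_sqrt.comp_aestronglyMeasurable hh.aestronglyMeasurable)]
    exact hh.congr (hsq hh0).symm
  have hölder := integral_mul_le_Lp_mul_Lq_of_nonneg Real.HolderConjugate.two_two
    (Eventually.of_forall fun x ↦ Real.sqrt_nonneg (f x))
    (Eventually.of_forall fun x ↦ Real.sqrt_nonneg (g x)) (hmem hf hf0) (hmem hg hg0)
  simpa only [Real.rpow_two, ← Real.sqrt_eq_rpow, integral_congr_ae (hsq hf0),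
    integral_congr_ae (hsq hg0)] using hölder

theorem integral_norm_mul_norm_inv_smul_le {E F : Type*} [NormedAddCommGroup E]
    [NormedAddCommGroup F] [NormedSpace ℝ F] {p : α → ℝ} {f : α → E} {g : α → F}
    (hp : ∀ᵐ x ∂μ, 0 < p x) (hf : Integrable (fun x ↦ ‖f x‖ ^ 2 / p x) μ)
    (hg : Integrable (fun x ↦ ‖g x‖ ^ 2 / p x) μ) :
    ∫ x, ‖f x‖ * ‖(p x)⁻¹ • g x‖ ∂μ ≤
      √(∫ x, ‖f x‖ ^ 2 / p x ∂μ) * √(∫ x, ‖g x‖ ^ 2 / p x ∂μ) := by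
  calc ∫ x, ‖f x‖ * ‖(p x)⁻¹ • g x‖ ∂μ
      = ∫ x, √(‖f x‖ ^ 2 / p x) * √(‖g x‖ ^ 2 / p x) ∂μ := by
        refine integral_congr_ae (hp.mono fun x hx ↦ ?_)
        simp only [norm_smul, norm_inv, Real.norm_of_nonneg hx.le, Real.sqrt_div (sq_nonneg _),
          Real.sqrt_sq (norm_nonneg _), div_mul_div_comm, Real.mul_self_sqrt hx.le]
        ring
    _ ≤ _ := integral_sqrt_mul_sqrt_le hf hg
        (hp.mono fun x hx ↦ by positivity) (hp.mono fun x hx ↦ by positivity)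

end CauchySchwarz

theorem norm_le_of_integral_smul_eq_zero {α E : Type*} {_ : MeasurableSpace α} {μ : Measure α}
    [NormedAddCommGroup E] [NormedSpace ℝ E] [CompleteSpace E] {w : α → ℝ} {F : α → E} {c : E}
    {K : ℝ} (hw : Integrable w μ) (hwF : Integrable (fun x ↦ w x • F x) μ)
    (hwF0 : ∫ x, w x • F x ∂μ = 0) (hw0 : ∫ x, w x ∂μ ≠ 0) (hF : ∀ᵐ x ∂μ, ‖c - F x‖ ≤ K) :
    ‖c‖ ≤ (∫ x, |w x| ∂μ) / |∫ x, w x ∂μ| * K := by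
  have hc : (∫ x, w x ∂μ) • c = ∫ x, w x • (c - F x) ∂μ := by
    simp only [smul_sub]
    rw [integral_sub (hw.smul_const c) hwF, hwF0, sub_zero, integral_smul_const]
  have hbound : ‖c‖ * |∫ x, w x ∂μ| ≤ (∫ x, |w x| ∂μ) * K :=
    calc ‖c‖ * |∫ x, w x ∂μ| = ‖∫ x, w x • (c - F x) ∂μ‖ := by
          rw [← hc, norm_smul, Real.norm_eq_abs, mul_comm]
      _ ≤ ∫ x, |w x| * K ∂μ := by
          refine norm_integral_le_of_norm_le (hw.abs.mul_const K) (hF.mono fun x hx ↦ ?_)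
          rw [norm_smul, Real.norm_eq_abs]
          gcongr
      _ = (∫ x, |w x| ∂μ) * K := integral_mul_const _ _
  rwa [div_mul_eq_mul_div, le_div_iff₀ (abs_pos.2 hw0)]

theorem sup_norm_squared_estimate_delta_general {E : Type*} [NormedAddCommGroup E]
    [NormedSpace ℝ E] [CompleteSpace E] {a b : ℝ} (hab : a ≤ b) {p w : ℝ → ℝ} {φ u : ℝ → E}
    (hp : ∀ᵐ x ∂volume.restrict (Ioc a b), 0 < p x) (hw : IntegrableOn w (Ioc a b))
    (hup : IntegrableOn (fun t ↦ (p t)⁻¹ • u t) (Ioc a b))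
    (hφ : ∀ x ∈ Icc a b, φ x = φ a + ∫ t in a..x, (p t)⁻¹ • u t)
    (hu2 : IntegrableOn (fun t ↦ ‖u t‖ ^ 2 / p t) (Ioc a b))
    (hφ2 : IntegrableOn (fun t ↦ ‖φ t‖ ^ 2 / p t) (Ioc a b))
    (hwφ : ∫ t in a..b, w t * ‖φ t‖ ^ 2 = 0) (hw0 : (∫ t in a..b, w t) ≠ 0) :
    (sSup ((fun x ↦ ‖φ x‖) '' Icc a b)) ^ 2
      ≤ 2 * (∫ t in a..b, |w t|) / |∫ t in a..b, w t| * √(∫ t in a..b, ‖u t‖ ^ 2 / p t)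
          * √(∫ t in a..b, ‖φ t‖ ^ 2 / p t) := by
  have hf := (intervalIntegrable_iff_integrableOn_Ioc_of_le hab).2 hup
  have hφc : ContinuousOn φ (Icc a b) := continuousOn_of_eq_add_integral hab hf hφ
  obtain ⟨x, hx, hsup⟩ := isCompact_Icc.exists_sSup_image_eq (nonempty_Icc.2 hab) hφc.norm
  have hosc : ∀ t ∈ Ioc a b,
      |‖φ x‖ ^ 2 - ‖φ t‖ ^ 2| ≤ 2 * ∫ s in a..b, ‖φ s‖ * ‖(p s)⁻¹ • u s‖ := fun t ht ↦
    abs_norm_sq_sub_norm_sq_le_integral hab hf hφ hx (Ioc_subset_Icc_self ht)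
  rw [hsup]
  simp only [intervalIntegral.integral_of_le hab] at hosc hwφ hw0 ⊢
  have hwφI : IntegrableOn (fun t ↦ w t * ‖φ t‖ ^ 2) (Ioc a b) :=
    hw.mul_continuousOn_of_subset (hφc.norm.pow 2) measurableSet_Ioc isCompact_Icc
      Ioc_subset_Icc_self
  have hmean : ‖φ x‖ ^ 2 ≤ (∫ t in Ioc a b, |w t|) / |∫ t in Ioc a b, w t|
      * (2 * ∫ t in Ioc a b, ‖φ t‖ * ‖(p t)⁻¹ • u t‖) := by
    simpa only [norm_pow, norm_norm] using norm_le_of_integral_smul_eq_zero hw hwφI hwφ hw0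
      (ae_restrict_of_forall_mem measurableSet_Ioc hosc)
  have hcs := integral_norm_mul_norm_inv_smul_le hp hφ2 hu2
  calc ‖φ x‖ ^ 2 ≤ _ := hmean
    _ ≤ (∫ t in Ioc a b, |w t|) / |∫ t in Ioc a b, w t|
        * (2 * (√(∫ t in Ioc a b, ‖φ t‖ ^ 2 / p t) * √(∫ t in Ioc a b, ‖u t‖ ^ 2 / p t))) := by
      gcongr
    _ = _ := by ring

/-- Estimate (5.9) of the paper: if ∫ₐᵇ w|φ|² = 0 and ∫ₐᵇ w ≠ 0 then
‖φ‖_∞² ≤ δ·‖φ'‖_{p,2}·‖φ‖_{1/p,2} with δ = 2 + 2‖w‖_{L¹}/|∫ₐᵇ w|,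
where u = pφ' is the quasi-derivative of φ. -/
theorem sup_norm_squared_estimate_delta
    (a b : ℝ) (hab : a < b) (p w : ℝ → ℝ)
    (hpm : Measurable p) (hwm : Measurable w)
    (hp_pos : ∀ᵐ x ∂(volume.restrict (Set.Ioc a b)), 0 < p x)
    (hp_int : IntegrableOn (fun x => 1 / p x) (Set.Ioc a b))
    (hw_int : IntegrableOn w (Set.Ioc a b))
    (φ u : ℝ → ℂ)
    (hφc : ContinuousOn φ (Set.Icc a b)) (huc : ContinuousOn u (Set.Icc a b))
    (hφ : ∀ x ∈ Set.Icc a b, φ x = φ a + ∫ t in a..x, u t / (p t : ℂ))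
    (hu2 : IntegrableOn (fun t => ‖u t‖ ^ 2 / p t) (Set.Ioc a b))
    (hφ2 : IntegrableOn (fun t => ‖φ t‖ ^ 2 / p t) (Set.Ioc a b))
    (hwφ : ∫ t in a..b, w t * ‖φ t‖ ^ 2 = 0)
    (hw0 : (∫ t in a..b, w t) ≠ 0)
    (δ : ℝ) (hδ : δ = 2 + 2 * (∫ t in a..b, |w t|) / |∫ t in a..b, w t|) :
    (sSup ((fun x => ‖φ x‖) '' Set.Icc a b)) ^ 2
      ≤ δ * Real.sqrt (∫ t in a..b, ‖u t‖ ^ 2 / p t)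
          * Real.sqrt (∫ t in a..b, ‖φ t‖ ^ 2 / p t) := by
  have hup : IntegrableOn (fun t ↦ (p t)⁻¹ • u t) (Set.Ioc a b) := by
    simpa only [one_div] using hp_int.smul_continuousOn_of_subset huc measurableSet_Ioc
      isCompact_Icc Ioc_subset_Icc_self
  have hφ' : ∀ x ∈ Set.Icc a b, φ x = φ a + ∫ t in a..x, (p t)⁻¹ • u t := by
    simpa only [Complex.real_smul, Complex.ofReal_inv, div_eq_inv_mul] using hφ
  refine le_trans
    (sup_norm_squared_estimate_delta_general hab.le hp_pos hw_int hup hφ' hu2 hφ2 hwφ hw0) ?_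
  rw [hδ]
  gcongr
  exact le_add_of_nonneg_left zero_le_two
end

section
/- Let λ ∈ ℂ with Im λ ≠ 0 and let (φ, u) be a solution of −(pφ')' + qφ = λwφ on [a,b] satisfying coupled self-adjoint boundary conditions (φ(b), u(b))ᵀ = e^{iθ} R (φ(a), u(a))ᵀ, where θ ∈ [0,2π) and R = (r_{ij}) is a real 2×2 matrix with det R = 1. Then ‖φ'‖_{p,2} ≤ β·‖φ‖_{1/p,2} and ‖φ‖_∞ ≤ γ·‖φ‖_{1/p,2}, where the constants α, β, γ are built from c := (|r₁₁| + |r₂₂| + 2)/|r₁₂| if r₁₂ ≠ 0 and c := |r₁₁ r₂₁| if r₁₂ = 0. -/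
open MeasureTheory Real Complex

/-!
Write `F = ‖φ‖_{1/p,2}`, `U = ‖φ'‖_{p,2}`, `L = ‖1/p‖_{L¹}`. By the Cauchy–Schwarz inequality `|φ|²`
varies by at most `2FU` on `[a, b]`, and its average against `1/p` is `F²/L`; hence
`|φ|² ≤ K := F²/L + 2FU`. Multiplying the equation by `conj φ` and integrating by parts leaves the
boundary term `u(b) conj φ(b) - u(a) conj φ(a)`, which is real for coupled conditions with
`det R = 1` and at most `cK`. Since `Im λ ≠ 0`, the imaginary part forces `∫ w|φ|² = 0`; the real
part then gives `U² = Re(boundary term) - ∫ q|φ|² ≤ αK`, a quadratic inequality for `U` whose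
solution is `U ≤ βF`. Inserting this into `|φ|² ≤ K` gives the bound on `‖φ‖_∞`.
-/

open Set Filter Topology

section Weighted

variable {X : Type*} {mX : MeasurableSpace X} {μ : Measure X}

lemma integral_pos_of_ae_pos [NeZero μ] {f : X → ℝ} (hf : Integrable f μ)
    (hpos : ∀ᵐ x ∂μ, 0 < f x) : 0 < ∫ x, f x ∂μ := by
  rw [integral_pos_iff_support_of_nonneg_ae (hpos.mono fun _ hx => hx.le) hf]
  have hsupp : Function.support f =ᵐ[μ] univ :=
    eventuallyEq_univ.2 (hpos.mono fun _ hx => hx.ne')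
  simp [measure_congr hsupp, NeZero.ne μ]

lemma integral_mul_div_le_sqrt_mul_sqrt {f g p : X → ℝ} (hp : ∀ᵐ x ∂μ, 0 ≤ p x)
    (hff : Integrable (fun x => f x ^ 2 / p x) μ) (hfg : Integrable (fun x => f x * g x / p x) μ)
    (hgg : Integrable (fun x => g x ^ 2 / p x) μ) :
    ∫ x, f x * g x / p x ∂μ ≤ √(∫ x, f x ^ 2 / p x ∂μ) * √(∫ x, g x ^ 2 / p x ∂μ) := by
  have sq_div_nonneg (h : X → ℝ) : 0 ≤ ∫ x, h x ^ 2 / p x ∂μ :=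
    integral_nonneg_of_ae (hp.mono fun x hx => div_nonneg (sq_nonneg _) hx)
  have expand (s : ℝ) : ∫ x, (s * f x + g x) ^ 2 / p x ∂μ
      = (∫ x, f x ^ 2 / p x ∂μ) * (s * s) + 2 * (∫ x, f x * g x / p x ∂μ) * s
        + ∫ x, g x ^ 2 / p x ∂μ := by
    have pointwise (x : X) : (s * f x + g x) ^ 2 / p x
        = s * s * (f x ^ 2 / p x) + 2 * s * (f x * g x / p x) + g x ^ 2 / p x := by ring
    simp_rw [pointwise]
    rw [integral_add ((hff.const_mul _).fun_add (hfg.const_mul _)) hgg,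
      integral_add (hff.const_mul _) (hfg.const_mul _), integral_const_mul, integral_const_mul]
    ring
  have hdiscrim := discrim_le_zero fun s => expand s ▸ sq_div_nonneg fun x => s * f x + g x
  rw [discrim] at hdiscrim
  rw [← Real.sqrt_mul (sq_div_nonneg f)]
  exact Real.le_sqrt_of_sq_le (by linarith)

end Weighted

/-- `F` is an indefinite integral of `f` on the interval between `a` and `b`: it is absolutely
continuous there with derivative `f` almost everywhere. -/
structure IsIndefiniteIntegral {E : Type*} [NormedAddCommGroup E] [NormedSpace ℝ E]
    (f F : ℝ → E) (a b : ℝ) : Prop where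
  intervalIntegrable : IntervalIntegrable f volume a b
  eq_add_integral : ∀ x ∈ uIcc a b, F x = F a + ∫ t in a..x, f t

namespace IsIndefiniteIntegral

section NormedSpace

variable {E : Type*} [NormedAddCommGroup E] [NormedSpace ℝ E] {f F : ℝ → E} {a b x y : ℝ}

lemma sub_eq_integral (h : IsIndefiniteIntegral f F a b) (hx : x ∈ uIcc a b)
    (hy : y ∈ uIcc a b) : F x - F y = ∫ t in y..x, f t := by
  have integrable_left {z : ℝ} (hz : z ∈ uIcc a b) : IntervalIntegrable f volume a z :=
    h.intervalIntegrable.mono_set (uIcc_subset_uIcc_left hz)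
  rw [h.eq_add_integral x hx, h.eq_add_integral y hy, add_sub_add_left_eq_sub,
    intervalIntegral.integral_interval_sub_left (integrable_left hx) (integrable_left hy)]

lemma absolutelyContinuousOnInterval (h : IsIndefiniteIntegral f F a b) :
    AbsolutelyContinuousOnInterval F a b := by
  have hnorm : IsIndefiniteIntegral (fun t => ‖f t‖) (fun x => ∫ t in a..x, ‖f t‖) a b :=
    ⟨h.intervalIntegrable.norm, by simp⟩
  have hac := h.intervalIntegrable.norm.absolutelyContinuousOnInterval_intervalIntegral
    (c := a) left_mem_uIcc
  rw [absolutelyContinuousOnInterval_iff] at hac ⊢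
  intro ε hε
  obtain ⟨δ, hδ, hlt⟩ := hac ε hε
  refine ⟨δ, hδ, fun I hI hlen => (Finset.sum_le_sum fun i hi => ?_).trans_lt (hlt I hI hlen)⟩
  obtain ⟨hx, hy⟩ := hI.1 i hi
  rw [dist_eq_norm, dist_eq_norm, h.sub_eq_integral hx hy, hnorm.sub_eq_integral hx hy]
  exact intervalIntegral.norm_integral_le_abs_integral_norm

lemma continuousOn (h : IsIndefiniteIntegral f F a b) : ContinuousOn F (uIcc a b) :=
  h.absolutelyContinuousOnInterval.continuousOn

lemma ae_hasDerivAt [CompleteSpace E] (h : IsIndefiniteIntegral f F a b) :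
    ∀ᵐ x, x ∈ uIcc a b → HasDerivAt F (f x) x := by
  filter_upwards [h.intervalIntegrable.ae_hasDerivAt_integral,
    Measure.ae_ne volume (a ⊓ b), Measure.ae_ne volume (a ⊔ b)] with x hderiv hne_inf hne_sup hx
  have hnhds : uIcc a b ∈ 𝓝 x :=
    Icc_mem_nhds (hx.1.lt_of_ne' hne_inf) (hx.2.lt_of_ne hne_sup)
  refine ((hderiv hx a left_mem_uIcc).const_add (F a)).congr_of_eventuallyEq ?_
  filter_upwards [hnhds] with y hy using h.eq_add_integral y hy

lemma of_ae_hasDerivAt [CompleteSpace E] (hf : IntervalIntegrable f volume a b)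
    (hF : AbsolutelyContinuousOnInterval F a b)
    (hderiv : ∀ᵐ x, x ∈ uIcc a b → HasDerivAt F (f x) x) : IsIndefiniteIntegral f F a b := by
  refine ⟨hf, fun x hx => ?_⟩
  have hint : IsIndefiniteIntegral f (fun x => ∫ t in a..x, f t) a b := ⟨hf, by simp⟩
  have deriv_sub_eq_zero :
      ∀ᵐ y, y ∈ uIcc a b → HasDerivAt (fun y => F y - ∫ t in a..y, f t) 0 y := by
    filter_upwards [hderiv, hint.ae_hasDerivAt] with y hFy hinty hy
    simpa using (hFy hy).fun_sub (hinty hy)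
  obtain ⟨C, hC⟩ := (hF.fun_sub
    hint.absolutelyContinuousOnInterval).const_of_ae_hasDerivAt_zero deriv_sub_eq_zero
  have hCa : F a = C := by simpa using hC a left_mem_uIcc
  rw [hCa, ← hC x hx, sub_add_cancel]

end NormedSpace

lemma mul {A : Type*} [NormedDivisionRing A] [NormedAlgebra ℝ A] [CompleteSpace A]
    {f F g G : ℝ → A} {a b : ℝ} (hF : IsIndefiniteIntegral f F a b)
    (hG : IsIndefiniteIntegral g G a b) :
    IsIndefiniteIntegral (fun t => f t * G t + F t * g t) (fun t => F t * G t) a b := by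
  refine of_ae_hasDerivAt
    ((hF.intervalIntegrable.mul_continuousOn hG.continuousOn).add
      (hG.intervalIntegrable.continuousOn_mul hF.continuousOn))
    (hF.absolutelyContinuousOnInterval.fun_smul hG.absolutelyContinuousOnInterval) ?_
  filter_upwards [hF.ae_hasDerivAt, hG.ae_hasDerivAt] with x hFx hGx hx
  exact (hFx hx).fun_mul (hGx hx)

section RCLike

variable {𝕜 : Type*} [RCLike 𝕜] {f F : ℝ → 𝕜} {a b x y : ℝ}

lemma conj (h : IsIndefiniteIntegral f F a b) :
    IsIndefiniteIntegral (fun t => starRingEnd 𝕜 (f t)) (fun t => starRingEnd 𝕜 (F t)) a b where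
  intervalIntegrable := by
    have := h.intervalIntegrable
    rw [intervalIntegrable_iff] at this ⊢
    exact RCLike.conjCLE.toContinuousLinearMap.integrable_comp this
  eq_add_integral x hx := by
    rw [h.eq_add_integral x hx, map_add, intervalIntegral.intervalIntegral_conj]

lemma norm_sq_sub_norm_sq_le (h : IsIndefiniteIntegral f F a b) (hab : a ≤ b)
    (hx : x ∈ uIcc a b) (hy : y ∈ uIcc a b) :
    ‖F x‖ ^ 2 - ‖F y‖ ^ 2 ≤ 2 * ∫ t in a..b, ‖F t‖ * ‖f t‖ := by
  have hsq := h.mul h.conj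
  have hint : IntervalIntegrable (fun t => ‖F t‖ * ‖f t‖) volume a b :=
    h.intervalIntegrable.norm.continuousOn_mul h.continuousOn.norm
  calc ‖F x‖ ^ 2 - ‖F y‖ ^ 2
      ≤ ‖F x * starRingEnd 𝕜 (F x) - F y * starRingEnd 𝕜 (F y)‖ := by
        simp only [RCLike.mul_conj]
        exact_mod_cast (le_abs_self _).trans_eq (RCLike.norm_ofReal (K := 𝕜) _).symm
    _ ≤ |∫ t in y..x, ‖f t * starRingEnd 𝕜 (F t) + F t * starRingEnd 𝕜 (f t)‖| := by
        rw [hsq.sub_eq_integral hx hy]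
        exact intervalIntegral.norm_integral_le_abs_integral_norm
    _ ≤ ∫ t in a..b, ‖f t * starRingEnd 𝕜 (F t) + F t * starRingEnd 𝕜 (f t)‖ := by
        refine (intervalIntegral.abs_integral_mono_interval
          (uIoc_subset_uIoc_of_uIcc_subset_uIcc (uIcc_subset_uIcc hy hx))
          (.of_forall fun _ => norm_nonneg _) hsq.intervalIntegrable.norm).trans_eq
          (abs_of_nonneg <| intervalIntegral.integral_nonneg hab fun _ _ => norm_nonneg _)
    _ ≤ ∫ t in a..b, 2 * (‖F t‖ * ‖f t‖) := by
        refine intervalIntegral.integral_mono_on hab hsq.intervalIntegrable.norm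
          (hint.const_mul 2) fun t _ => (norm_add_le _ _).trans_eq ?_
        simp only [norm_mul, RCLike.norm_conj]
        ring
    _ = 2 * ∫ t in a..b, ‖F t‖ * ‖f t‖ := intervalIntegral.integral_const_mul _ _

end RCLike

end IsIndefiniteIntegral

section Weight

variable {a b : ℝ} {p : ℝ → ℝ}

lemma intervalIntegrable_div_of_continuousOn {A : Type*} [NormedDivisionRing A] {g k : ℝ → A}
    (hk : IntervalIntegrable (fun t => 1 / k t) volume a b) (hg : ContinuousOn g (uIcc a b)) :
    IntervalIntegrable (fun t => g t / k t) volume a b := by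
  simpa only [mul_one_div] using hk.continuousOn_mul hg

lemma intervalIntegrable_ofReal {f : ℝ → ℝ} (hf : IntervalIntegrable f volume a b) :
    IntervalIntegrable (fun t => (f t : ℂ)) volume a b :=
  ⟨hf.1.ofReal, hf.2.ofReal⟩

lemma integral_one_div_pos (hab : a < b)
    (hp_pos : ∀ᵐ t ∂volume.restrict (Ioc a b), 0 < p t)
    (hp_int : IntervalIntegrable (fun t => 1 / p t) volume a b) : 0 < ∫ t in a..b, 1 / p t := by
  have : NeZero (volume.restrict (Ioc a b)) := ⟨by simpa using hab⟩
  rw [intervalIntegral.integral_of_le hab.le]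
  exact integral_pos_of_ae_pos hp_int.1 (hp_pos.mono fun _ ht => one_div_pos.2 ht)

lemma le_integral_div_add_of_forall_le {g : ℝ → ℝ} {k M : ℝ} (hab : a < b)
    (hp_pos : ∀ᵐ t ∂volume.restrict (Ioc a b), 0 < p t)
    (hp_int : IntervalIntegrable (fun t => 1 / p t) volume a b) (hg : ContinuousOn g (uIcc a b))
    (hk : ∀ t ∈ uIcc a b, k ≤ g t + M) :
    k ≤ (∫ t in a..b, g t / p t) / (∫ t in a..b, 1 / p t) + M := by
  rw [← sub_le_iff_le_add, le_div_iff₀ (integral_one_div_pos hab hp_pos hp_int),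
    ← intervalIntegral.integral_const_mul]
  refine intervalIntegral.integral_mono_ae_restrict hab.le (hp_int.const_mul _)
    (intervalIntegrable_div_of_continuousOn hp_int hg) ?_
  rw [restrict_Ioc_eq_restrict_Icc] at hp_pos
  filter_upwards [hp_pos, ae_restrict_mem measurableSet_Icc] with t hpt ht
  rw [mul_one_div]
  gcongr
  exact sub_le_iff_le_add.2 (hk t (Icc_subset_uIcc ht))

/-- The norm `‖f‖_{1/p,2} = (∫ₐᵇ |f|²/p)^{1/2}`. Evaluated at the quasi-derivative `u = pφ'` it is
the norm `‖φ'‖_{p,2}`, so the same definition serves for both norms. -/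
noncomputable def weightedNorm {E : Type*} [Norm E] (p : ℝ → ℝ) (a b : ℝ) (f : ℝ → E) : ℝ :=
  √(∫ t in a..b, ‖f t‖ ^ 2 / p t)

lemma weightedNorm_sq {E : Type*} [Norm E] {f : ℝ → E} (hab : a ≤ b)
    (hp_pos : ∀ᵐ t ∂volume.restrict (Ioc a b), 0 < p t) :
    weightedNorm p a b f ^ 2 = ∫ t in a..b, ‖f t‖ ^ 2 / p t := by
  refine Real.sq_sqrt (intervalIntegral.integral_nonneg_of_ae_restrict hab ?_)
  rw [restrict_Ioc_eq_restrict_Icc] at hp_pos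
  exact hp_pos.mono fun t ht => div_nonneg (sq_nonneg _) ht.le

lemma weightedNorm_nonneg {E : Type*} [Norm E] {f : ℝ → E} : 0 ≤ weightedNorm p a b f :=
  Real.sqrt_nonneg _

lemma integral_norm_mul_norm_div_le {E F : Type*} [NormedAddCommGroup E] [NormedAddCommGroup F]
    {f : ℝ → E} {g : ℝ → F} (hab : a ≤ b)
    (hp_pos : ∀ᵐ t ∂volume.restrict (Ioc a b), 0 < p t)
    (hp_int : IntervalIntegrable (fun t => 1 / p t) volume a b)
    (hf : ContinuousOn f (uIcc a b)) (hg : ContinuousOn g (uIcc a b)) :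
    ∫ t in a..b, ‖f t‖ * ‖g t‖ / p t ≤ weightedNorm p a b f * weightedNorm p a b g := by
  simp only [weightedNorm, intervalIntegral.integral_of_le hab]
  exact integral_mul_div_le_sqrt_mul_sqrt (hp_pos.mono fun _ ht => ht.le)
    (intervalIntegrable_div_of_continuousOn hp_int (hf.norm.pow 2)).1
    (intervalIntegrable_div_of_continuousOn hp_int (hf.norm.mul hg.norm)).1
    (intervalIntegrable_div_of_continuousOn hp_int (hg.norm.pow 2)).1

variable {𝕜 : Type*} [RCLike 𝕜] {φ u : ℝ → 𝕜} {x y : ℝ}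

lemma norm_sq_le_add_weightedNorm_mul (hab : a ≤ b)
    (hp_pos : ∀ᵐ t ∂volume.restrict (Ioc a b), 0 < p t)
    (hp_int : IntervalIntegrable (fun t => 1 / p t) volume a b)
    (hφ : IsIndefiniteIntegral (fun t => u t / (p t : 𝕜)) φ a b) (hu : ContinuousOn u (uIcc a b))
    (hx : x ∈ uIcc a b) (hy : y ∈ uIcc a b) :
    ‖φ x‖ ^ 2 ≤ ‖φ y‖ ^ 2 + 2 * (weightedNorm p a b φ * weightedNorm p a b u) := by
  have norm_deriv : ∫ t in a..b, ‖φ t‖ * ‖u t / (p t : 𝕜)‖ = ∫ t in a..b, ‖φ t‖ * ‖u t‖ / p t := by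
    simp only [intervalIntegral.integral_of_le hab]
    refine integral_congr_ae (hp_pos.mono fun t ht => ?_)
    simp only [norm_div, RCLike.norm_ofReal, abs_of_pos ht, mul_div_assoc]
  linarith [hφ.norm_sq_sub_norm_sq_le hab hx hy,
    integral_norm_mul_norm_div_le hab hp_pos hp_int hφ.continuousOn hu]

lemma norm_sq_le_of_isIndefiniteIntegral_div (hab : a < b)
    (hp_pos : ∀ᵐ t ∂volume.restrict (Ioc a b), 0 < p t)
    (hp_int : IntervalIntegrable (fun t => 1 / p t) volume a b)
    (hφ : IsIndefiniteIntegral (fun t => u t / (p t : 𝕜)) φ a b) (hu : ContinuousOn u (uIcc a b))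
    (hx : x ∈ uIcc a b) :
    ‖φ x‖ ^ 2 ≤ weightedNorm p a b φ ^ 2 / (∫ t in a..b, 1 / p t)
      + 2 * (weightedNorm p a b φ * weightedNorm p a b u) := by
  rw [weightedNorm_sq hab.le hp_pos]
  exact le_integral_div_add_of_forall_le hab hp_pos hp_int (hφ.continuousOn.norm.pow 2)
    fun _ hy => norm_sq_le_add_weightedNorm_mul hab.le hp_pos hp_int hφ hu hx hy

end Weight

lemma neg_integral_mul_le_integral_abs_min_zero_mul {a b K : ℝ} {q g : ℝ → ℝ} (hab : a ≤ b)
    (hq : IntervalIntegrable q volume a b) (hg : ContinuousOn g (uIcc a b))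
    (hg_nonneg : ∀ t ∈ Icc a b, 0 ≤ g t) (hg_le : ∀ t ∈ Icc a b, g t ≤ K) :
    -∫ t in a..b, q t * g t ≤ (∫ t in a..b, |min (q t) 0|) * K := by
  have hmin : IntervalIntegrable (fun t => min (q t) 0) volume a b :=
    ⟨hq.1.inf (integrable_zero _ _ _), hq.2.inf (integrable_zero _ _ _)⟩
  rw [← intervalIntegral.integral_neg, ← intervalIntegral.integral_mul_const]
  refine intervalIntegral.integral_mono_on hab (hq.mul_continuousOn hg).neg (hmin.abs.mul_const K)
    fun t ht => ?_
  have neg_le_abs_min : -q t ≤ |min (q t) 0| :=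
    (neg_le_neg (min_le_left _ _)).trans (neg_le_abs _)
  calc -(q t * g t) = -q t * g t := (neg_mul _ _).symm
    _ ≤ |min (q t) 0| * g t := mul_le_mul_of_nonneg_right neg_le_abs_min (hg_nonneg t ht)
    _ ≤ |min (q t) 0| * K := mul_le_mul_of_nonneg_left (hg_le t ht) (abs_nonneg _)

section Coupled

variable {r11 r12 r21 r22 : ℝ}

/-- The constant `c` of the coupled boundary conditions with matrix `R = (rᵢⱼ)`. -/
noncomputable def coupledConst (r11 r12 r21 r22 : ℝ) : ℝ :=
  if r12 = 0 then |r11 * r21| else (|r11| + |r22| + 2) / |r12|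

lemma coupledConst_nonneg : 0 ≤ coupledConst r11 r12 r21 r22 := by
  unfold coupledConst
  split_ifs <;> positivity

variable {φa ua φb ub e : ℂ}

lemma mul_conj_eq_of_coupled (he : ‖e‖ = 1) (hφ : φb = e * (r11 * φa + r12 * ua))
    (hu : ub = e * (r21 * φa + r22 * ua)) :
    ub * starRingEnd ℂ φb
      = (r21 * φa + r22 * ua) * (r11 * starRingEnd ℂ φa + r12 * starRingEnd ℂ ua) := by
  have he_conj : e * starRingEnd ℂ e = 1 := by rw [Complex.mul_conj', he]; norm_num
  rw [hφ, hu]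
  simp only [map_mul, map_add, Complex.conj_ofReal]
  linear_combination
    (r21 * φa + r22 * ua) * (r11 * starRingEnd ℂ φa + r12 * starRingEnd ℂ ua) * he_conj

lemma im_mul_conj_eq_of_coupled (he : ‖e‖ = 1) (hdet : r11 * r22 - r12 * r21 = 1)
    (hφ : φb = e * (r11 * φa + r12 * ua)) (hu : ub = e * (r21 * φa + r22 * ua)) :
    (ub * starRingEnd ℂ φb).im = (ua * starRingEnd ℂ φa).im := by
  rw [mul_conj_eq_of_coupled he hφ hu]
  simp only [mul_im, mul_re, add_im, add_re, ofReal_re, ofReal_im, conj_re, conj_im]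
  linear_combination (ua.im * φa.re - ua.re * φa.im) * hdet

lemma re_mul_conj_sub_le_of_coupled_zero (he : ‖e‖ = 1) (hdet : r11 * r22 = 1)
    (hφ : φb = e * (r11 * φa)) (hu : ub = e * (r21 * φa + r22 * ua)) :
    (ub * starRingEnd ℂ φb - ua * starRingEnd ℂ φa).re ≤ |r11 * r21| * ‖φa‖ ^ 2 := by
  have hre : (ub * starRingEnd ℂ φb - ua * starRingEnd ℂ φa).re = r11 * r21 * ‖φa‖ ^ 2 := by
    rw [mul_conj_eq_of_coupled (r12 := 0) he (by simpa using hφ) hu,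
      ← Complex.normSq_eq_norm_sq, Complex.normSq_apply]
    simp only [mul_im, mul_re, sub_re, add_im, add_re, ofReal_re, ofReal_im, conj_re, conj_im]
    linear_combination (ua.re * φa.re + ua.im * φa.im) * hdet
  rw [hre]
  gcongr
  exact le_abs_self _

lemma norm_le_of_coupled (he : ‖e‖ = 1) (hdet : r11 * r22 - r12 * r21 = 1)
    (hφ : φb = e * (r11 * φa + r12 * ua)) (hu : ub = e * (r21 * φa + r22 * ua)) :
    |r12| * ‖ua‖ ≤ ‖φb‖ + |r11| * ‖φa‖ ∧ |r12| * ‖ub‖ ≤ |r22| * ‖φb‖ + ‖φa‖ := by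
  have hdet' : (r11 : ℂ) * r22 - r12 * r21 = 1 := by exact_mod_cast hdet
  have left_eq : e * (r12 * ua) = φb - e * (r11 * φa) := by rw [hφ]; ring
  have right_eq : r12 * ub = r22 * φb - e * φa := by
    rw [hφ, hu]
    linear_combination (-e * φa) * hdet'
  constructor
  · calc |r12| * ‖ua‖ = ‖e * (r12 * ua)‖ := by simp [he]
      _ ≤ ‖φb‖ + ‖e * (r11 * φa)‖ := left_eq ▸ norm_sub_le _ _
      _ = ‖φb‖ + |r11| * ‖φa‖ := by simp [he]
  · calc |r12| * ‖ub‖ = ‖r12 * ub‖ := by simp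
      _ ≤ ‖r22 * φb‖ + ‖e * φa‖ := right_eq ▸ norm_sub_le _ _
      _ = |r22| * ‖φb‖ + ‖φa‖ := by simp [he]

lemma re_mul_conj_sub_le_of_coupled_ne_zero (he : ‖e‖ = 1) (hdet : r11 * r22 - r12 * r21 = 1)
    (hφ : φb = e * (r11 * φa + r12 * ua)) (hu : ub = e * (r21 * φa + r22 * ua)) (h12 : r12 ≠ 0)
    {K : ℝ} (ha : ‖φa‖ ^ 2 ≤ K) (hb : ‖φb‖ ^ 2 ≤ K) :
    (ub * starRingEnd ℂ φb - ua * starRingEnd ℂ φa).re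
      ≤ (|r11| + |r22| + 2) / |r12| * K := by
  obtain ⟨hua, hub⟩ := norm_le_of_coupled he hdet hφ hu
  rw [div_mul_eq_mul_div, le_div_iff₀' (abs_pos.2 h12)]
  calc |r12| * (ub * starRingEnd ℂ φb - ua * starRingEnd ℂ φa).re
      ≤ |r12| * (‖ub‖ * ‖φb‖ + ‖ua‖ * ‖φa‖) := by
        gcongr
        exact (Complex.re_le_norm _).trans ((norm_sub_le _ _).trans_eq (by simp))
    _ = |r12| * ‖ub‖ * ‖φb‖ + |r12| * ‖ua‖ * ‖φa‖ := by ring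
    _ ≤ (|r22| * ‖φb‖ + ‖φa‖) * ‖φb‖ + (‖φb‖ + |r11| * ‖φa‖) * ‖φa‖ := by gcongr
    _ = |r22| * ‖φb‖ ^ 2 + |r11| * ‖φa‖ ^ 2 + 2 * ‖φa‖ * ‖φb‖ := by ring
    _ ≤ |r22| * K + |r11| * K + (K + K) := by
        gcongr
        exact (two_mul_le_add_sq _ _).trans (add_le_add ha hb)
    _ = (|r11| + |r22| + 2) * K := by ring

lemma re_mul_conj_sub_le_of_coupled (he : ‖e‖ = 1) (hdet : r11 * r22 - r12 * r21 = 1)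
    (hφ : φb = e * (r11 * φa + r12 * ua)) (hu : ub = e * (r21 * φa + r22 * ua))
    {K : ℝ} (ha : ‖φa‖ ^ 2 ≤ K) (hb : ‖φb‖ ^ 2 ≤ K) :
    (ub * starRingEnd ℂ φb - ua * starRingEnd ℂ φa).re ≤ coupledConst r11 r12 r21 r22 * K := by
  unfold coupledConst
  split_ifs with h12
  · subst h12
    exact (re_mul_conj_sub_le_of_coupled_zero he (by simpa using hdet) (by simpa using hφ) hu).trans
      (mul_le_mul_of_nonneg_left ha (abs_nonneg _))
  · exact re_mul_conj_sub_le_of_coupled_ne_zero he hdet hφ hu h12 ha hb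

end Coupled

section Constants

/-- The constant `β` as a function of `L = ‖1/p‖_{L¹}` and `α`: the larger root of
`t² = α (1 / L + 2 t)`. -/
noncomputable def derivativeBound (L α : ℝ) : ℝ := √(α * (1 / L + α)) + α

/-- The constant `γ` as a function of `L = ‖1/p‖_{L¹}` and `α`. -/
noncomputable def supBound (L α : ℝ) : ℝ := √(2 * derivativeBound L α + 1 / L)

variable {L α F U : ℝ}

lemma derivativeBound_nonneg (hα : 0 ≤ α) : 0 ≤ derivativeBound L α :=
  add_nonneg (Real.sqrt_nonneg _) hα

lemma le_derivativeBound_mul (hL : 0 ≤ L) (hα : 0 ≤ α) (hF : 0 ≤ F)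
    (h : U ^ 2 ≤ α * (F ^ 2 / L + 2 * (F * U))) : U ≤ derivativeBound L α * F := by
  have complete_square : (U - α * F) ^ 2 ≤ (√(α * (1 / L + α)) * F) ^ 2 := by
    rw [mul_pow, Real.sq_sqrt (by positivity)]
    linear_combination h
  rw [derivativeBound, add_mul, ← sub_le_iff_le_add]
  exact le_of_sq_le_sq complete_square (by positivity)

lemma le_supBound_mul {y : ℝ} (hL : 0 ≤ L) (hα : 0 ≤ α) (hF : 0 ≤ F)
    (hU : U ≤ derivativeBound L α * F) (hy : y ^ 2 ≤ F ^ 2 / L + 2 * (F * U)) :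
    y ≤ supBound L α * F := by
  have hβ : 0 ≤ derivativeBound L α := derivativeBound_nonneg hα
  refine le_of_sq_le_sq ?_ (mul_nonneg (Real.sqrt_nonneg _) hF)
  calc y ^ 2 ≤ F ^ 2 / L + 2 * (F * U) := hy
    _ ≤ F ^ 2 / L + 2 * (F * (derivativeBound L α * F)) := by gcongr
    _ = (supBound L α * F) ^ 2 := by
      rw [supBound, mul_pow, Real.sq_sqrt (by positivity)]
      ring

end Constants

/-- `φ` is a solution of `-(pφ')' + qφ = λwφ` on `[a, b]` with quasi-derivative `u = pφ'`, written
as a first-order system of integral equations for the pair `(φ, u)`. -/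
structure IsSturmLiouvilleSolution (p q w : ℝ → ℝ) (lam : ℂ) (a b : ℝ) (φ u : ℝ → ℂ) : Prop where
  isIndefiniteIntegral : IsIndefiniteIntegral (fun t => u t / (p t : ℂ)) φ a b
  isIndefiniteIntegral_quasiDeriv :
    IsIndefiniteIntegral (fun t => ((q t : ℂ) - lam * (w t : ℂ)) * φ t) u a b

/-- The boundary term `u(b) conj φ(b) - u(a) conj φ(a)` left over when `u' conj φ` is integrated by
parts. -/
def boundaryForm (φ u : ℝ → ℂ) (a b : ℝ) : ℂ :=
  u b * starRingEnd ℂ (φ b) - u a * starRingEnd ℂ (φ a)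

namespace IsSturmLiouvilleSolution

variable {p q w : ℝ → ℝ} {lam : ℂ} {a b c : ℝ} {φ u : ℝ → ℂ}

lemma of_continuousOn (hp_int : IntervalIntegrable (fun t => 1 / p t) volume a b)
    (hq_int : IntervalIntegrable q volume a b) (hw_int : IntervalIntegrable w volume a b)
    (hφc : ContinuousOn φ (uIcc a b)) (huc : ContinuousOn u (uIcc a b))
    (hφ : ∀ x ∈ uIcc a b, φ x = φ a + ∫ t in a..x, u t / (p t : ℂ))
    (hu : ∀ x ∈ uIcc a b, u x = u a + ∫ t in a..x, ((q t : ℂ) - lam * (w t : ℂ)) * φ t) :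
    IsSturmLiouvilleSolution p q w lam a b φ u where
  isIndefiniteIntegral := by
    refine ⟨intervalIntegrable_div_of_continuousOn ?_ huc, hφ⟩
    simpa only [ofReal_div, ofReal_one] using intervalIntegrable_ofReal hp_int
  isIndefiniteIntegral_quasiDeriv :=
    ⟨((intervalIntegrable_ofReal hq_int).sub
      ((intervalIntegrable_ofReal hw_int).const_mul lam)).mul_continuousOn hφc, hu⟩

lemma boundaryForm_eq (h : IsSturmLiouvilleSolution p q w lam a b φ u)
    (hp_int : IntervalIntegrable (fun t => 1 / p t) volume a b)
    (hq_int : IntervalIntegrable q volume a b) (hw_int : IntervalIntegrable w volume a b) :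
    boundaryForm φ u a b
      = ((∫ t in a..b, q t * ‖φ t‖ ^ 2) + ∫ t in a..b, ‖u t‖ ^ 2 / p t : ℝ)
        - lam * (∫ t in a..b, w t * ‖φ t‖ ^ 2 : ℝ) := by
  have hφ := h.isIndefiniteIntegral
  have hu := h.isIndefiniteIntegral_quasiDeriv
  have hq : IntervalIntegrable (fun t => q t * ‖φ t‖ ^ 2) volume a b :=
    hq_int.mul_continuousOn (hφ.continuousOn.norm.pow 2)
  have hw : IntervalIntegrable (fun t => w t * ‖φ t‖ ^ 2) volume a b :=
    hw_int.mul_continuousOn (hφ.continuousOn.norm.pow 2)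
  have hp : IntervalIntegrable (fun t => ‖u t‖ ^ 2 / p t) volume a b :=
    intervalIntegrable_div_of_continuousOn hp_int (hu.continuousOn.norm.pow 2)
  have integrand_eq (t : ℝ) : ((q t : ℂ) - lam * (w t : ℂ)) * φ t * starRingEnd ℂ (φ t)
      + u t * starRingEnd ℂ (u t / (p t : ℂ))
      = ((q t * ‖φ t‖ ^ 2 + ‖u t‖ ^ 2 / p t : ℝ) : ℂ) - lam * ((w t * ‖φ t‖ ^ 2 : ℝ) : ℂ) := by
    rw [map_div₀, Complex.conj_ofReal, mul_assoc, Complex.mul_conj', mul_div_assoc',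
      Complex.mul_conj']
    push_cast
    ring
  rw [boundaryForm, (hu.mul hφ.conj).sub_eq_integral right_mem_uIcc left_mem_uIcc]
  simp only [integrand_eq]
  rw [intervalIntegral.integral_sub (intervalIntegrable_ofReal (hq.add hp))
      ((intervalIntegrable_ofReal hw).const_mul lam), intervalIntegral.integral_const_mul,
    intervalIntegral.integral_ofReal, intervalIntegral.integral_ofReal,
    intervalIntegral.integral_add hq hp]

lemma re_boundaryForm_eq (h : IsSturmLiouvilleSolution p q w lam a b φ u)
    (hp_int : IntervalIntegrable (fun t => 1 / p t) volume a b)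
    (hq_int : IntervalIntegrable q volume a b) (hw_int : IntervalIntegrable w volume a b)
    (hlam : lam.im ≠ 0) (him : (boundaryForm φ u a b).im = 0) :
    (boundaryForm φ u a b).re
      = (∫ t in a..b, q t * ‖φ t‖ ^ 2) + ∫ t in a..b, ‖u t‖ ^ 2 / p t := by
  have heq := h.boundaryForm_eq hp_int hq_int hw_int
  have weight_integral_eq_zero : ∫ t in a..b, w t * ‖φ t‖ ^ 2 = 0 := by
    rw [heq, sub_im, ofReal_im, im_mul_ofReal, zero_sub, neg_eq_zero] at him
    exact (mul_eq_zero.1 him).resolve_left hlam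
  rw [heq, weight_integral_eq_zero, ofReal_zero, mul_zero, sub_zero, ofReal_re]

lemma weightedNorm_quasiDeriv_sq_le (h : IsSturmLiouvilleSolution p q w lam a b φ u) {K : ℝ}
    (hab : a ≤ b) (hp_pos : ∀ᵐ t ∂volume.restrict (Ioc a b), 0 < p t)
    (hp_int : IntervalIntegrable (fun t => 1 / p t) volume a b)
    (hq_int : IntervalIntegrable q volume a b) (hw_int : IntervalIntegrable w volume a b)
    (hlam : lam.im ≠ 0) (him : (boundaryForm φ u a b).im = 0)
    (hre : (boundaryForm φ u a b).re ≤ c * K) (hK : ∀ t ∈ Icc a b, ‖φ t‖ ^ 2 ≤ K) :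
    weightedNorm p a b u ^ 2 ≤ (c + ∫ t in a..b, |min (q t) 0|) * K := by
  have negative_part_le :
      -∫ t in a..b, q t * ‖φ t‖ ^ 2 ≤ (∫ t in a..b, |min (q t) 0|) * K :=
    neg_integral_mul_le_integral_abs_min_zero_mul hab hq_int
      (h.isIndefiniteIntegral.continuousOn.norm.pow 2) (fun _ _ => sq_nonneg _) hK
  rw [weightedNorm_sq hab hp_pos, add_mul]
  linarith [h.re_boundaryForm_eq hp_int hq_int hw_int hlam him]

theorem norm_estimates (h : IsSturmLiouvilleSolution p q w lam a b φ u)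
    (hab : a < b) (hp_pos : ∀ᵐ t ∂volume.restrict (Ioc a b), 0 < p t)
    (hp_int : IntervalIntegrable (fun t => 1 / p t) volume a b)
    (hq_int : IntervalIntegrable q volume a b) (hw_int : IntervalIntegrable w volume a b)
    (hlam : lam.im ≠ 0) (hc : 0 ≤ c) (him : (boundaryForm φ u a b).im = 0)
    (hre : (boundaryForm φ u a b).re ≤ c * max (‖φ a‖ ^ 2) (‖φ b‖ ^ 2)) :
    weightedNorm p a b u
        ≤ derivativeBound (∫ t in a..b, 1 / p t) (c + ∫ t in a..b, |min (q t) 0|)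
          * weightedNorm p a b φ
      ∧ ∀ x ∈ Icc a b, ‖φ x‖
        ≤ supBound (∫ t in a..b, 1 / p t) (c + ∫ t in a..b, |min (q t) 0|)
          * weightedNorm p a b φ := by
  have hα : 0 ≤ c + ∫ t in a..b, |min (q t) 0| :=
    add_nonneg hc (intervalIntegral.integral_nonneg hab.le fun _ _ => abs_nonneg _)
  have hL : 0 ≤ ∫ t in a..b, 1 / p t := (integral_one_div_pos hab hp_pos hp_int).le
  have sup_sq_le : ∀ x ∈ Icc a b, ‖φ x‖ ^ 2 ≤ _ := fun x hx =>
    norm_sq_le_of_isIndefiniteIntegral_div hab hp_pos hp_int h.isIndefiniteIntegral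
      h.isIndefiniteIntegral_quasiDeriv.continuousOn (Icc_subset_uIcc hx)
  have hu := le_derivativeBound_mul hL hα weightedNorm_nonneg <|
    h.weightedNorm_quasiDeriv_sq_le hab.le hp_pos hp_int hq_int hw_int hlam him
      (hre.trans <| mul_le_mul_of_nonneg_left (max_le (sup_sq_le a (left_mem_Icc.2 hab.le))
        (sup_sq_le b (right_mem_Icc.2 hab.le))) hc) sup_sq_le
  exact ⟨hu, fun x hx => le_supBound_mul hL hα weightedNorm_nonneg hu (sup_sq_le x hx)⟩

end IsSturmLiouvilleSolution

theorem eigenfunction_norm_estimates_coupled_general {a b : ℝ} (hab : a < b) {p q w : ℝ → ℝ}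
    (hp_pos : ∀ᵐ t ∂volume.restrict (Ioc a b), 0 < p t)
    (hp_int : IntervalIntegrable (fun t => 1 / p t) volume a b)
    (hq_int : IntervalIntegrable q volume a b) (hw_int : IntervalIntegrable w volume a b)
    {lam : ℂ} (hlam : lam.im ≠ 0) {φ u : ℝ → ℂ} (h : IsSturmLiouvilleSolution p q w lam a b φ u)
    {e : ℂ} (he : ‖e‖ = 1) {r11 r12 r21 r22 : ℝ} (hdet : r11 * r22 - r12 * r21 = 1)
    (hbcφ : φ b = e * (r11 * φ a + r12 * u a)) (hbcu : u b = e * (r21 * φ a + r22 * u a)) :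
    weightedNorm p a b u
        ≤ derivativeBound (∫ t in a..b, 1 / p t)
            (coupledConst r11 r12 r21 r22 + ∫ t in a..b, |min (q t) 0|) * weightedNorm p a b φ
      ∧ sSup ((fun x => ‖φ x‖) '' Icc a b)
        ≤ supBound (∫ t in a..b, 1 / p t)
            (coupledConst r11 r12 r21 r22 + ∫ t in a..b, |min (q t) 0|) * weightedNorm p a b φ := by
  have him : (boundaryForm φ u a b).im = 0 :=
    sub_eq_zero.2 (im_mul_conj_eq_of_coupled he hdet hbcφ hbcu)
  have hre := re_mul_conj_sub_le_of_coupled he hdet hbcφ hbcu (le_max_left _ _) (le_max_right _ _)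
  obtain ⟨hderiv, hsup⟩ :=
    h.norm_estimates hab hp_pos hp_int hq_int hw_int hlam coupledConst_nonneg him hre
  exact ⟨hderiv, csSup_le ((nonempty_Icc.2 hab.le).image _) (forall_mem_image.2 hsup)⟩

/-- Lemma 3.1 of the paper for coupled self-adjoint boundary conditions:
for a non-real eigenvalue λ and a corresponding solution (φ, u),
‖φ'‖_{p,2} ≤ β·‖φ‖_{1/p,2} and ‖φ‖_∞ ≤ γ·‖φ‖_{1/p,2}, where the constants
are built from c = (|r₁₁|+|r₂₂|+2)/|r₁₂| if r₁₂ ≠ 0 and c = |r₁₁r₂₁| if r₁₂ = 0. -/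
theorem eigenfunction_norm_estimates_coupled
    (a b : ℝ) (hab : a < b) (p q w : ℝ → ℝ)
    (hpm : Measurable p) (hqm : Measurable q) (hwm : Measurable w)
    (hp_pos : ∀ᵐ x ∂(volume.restrict (Set.Ioc a b)), 0 < p x)
    (hp_int : IntegrableOn (fun x => 1 / p x) (Set.Ioc a b))
    (hq_int : IntegrableOn q (Set.Ioc a b))
    (hw_int : IntegrableOn w (Set.Ioc a b))
    (hw_ne : ∀ᵐ x ∂(volume.restrict (Set.Ioc a b)), w x ≠ 0)
    (lam : ℂ) (hlam : lam.im ≠ 0) (φ u : ℝ → ℂ)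
    (hφc : ContinuousOn φ (Set.Icc a b)) (huc : ContinuousOn u (Set.Icc a b))
    (hφ : ∀ x ∈ Set.Icc a b, φ x = φ a + ∫ t in a..x, u t / (p t : ℂ))
    (hu : ∀ x ∈ Set.Icc a b, u x = u a + ∫ t in a..x, ((q t : ℂ) - lam * (w t : ℂ)) * φ t)
    (θ : ℝ) (hθ : θ ∈ Set.Ico 0 (2 * π))
    (r11 r12 r21 r22 : ℝ) (hdet : r11 * r22 - r12 * r21 = 1)
    (hbcφ : φ b = Complex.exp (θ * Complex.I) * ((r11 : ℂ) * φ a + (r12 : ℂ) * u a))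
    (hbcu : u b = Complex.exp (θ * Complex.I) * ((r21 : ℂ) * φ a + (r22 : ℂ) * u a))
    (c α β γ : ℝ)
    (hc : c = if r12 = 0 then |r11 * r21| else (|r11| + |r22| + 2) / |r12|)
    (hα : α = c + ∫ t in a..b, |min (q t) 0|)
    (hβ : β = Real.sqrt (α * (1 / (∫ t in a..b, 1 / p t) + α)) + α)
    (hγ : γ = Real.sqrt (2 * β + 1 / (∫ t in a..b, 1 / p t))) :
    Real.sqrt (∫ t in a..b, ‖u t‖ ^ 2 / p t)
        ≤ β * Real.sqrt (∫ t in a..b, ‖φ t‖ ^ 2 / p t)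
      ∧ sSup ((fun x => ‖φ x‖) '' Set.Icc a b)
        ≤ γ * Real.sqrt (∫ t in a..b, ‖φ t‖ ^ 2 / p t) := by
  subst hc hα hβ hγ
  have intervalIntegrable {f : ℝ → ℝ} (hf : IntegrableOn f (Ioc a b)) :
      IntervalIntegrable f volume a b := (intervalIntegrable_iff_integrableOn_Ioc_of_le hab.le).2 hf
  have hp := intervalIntegrable hp_int
  have hq := intervalIntegrable hq_int
  have hw := intervalIntegrable hw_int
  rw [← uIcc_of_le hab.le] at hφc huc hφ hu
  exact eigenfunction_norm_estimates_coupled_general hab hp_pos hp hq hw hlam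
    (.of_continuousOn hp hq hw hφc huc hφ hu) (Complex.norm_exp_ofReal_mul_I θ) hdet hbcφ hbcu
end
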